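/- arXiv:2605.20895 — 2 statements merged into one kernel-verified Lean document; each statement's English description precedes it below -/
import Mathlib

section
/- For all integers n ≥ 2 it holds that s_{1,3}(1, F_{n−1}; F_n) = (−1)^n s_{3,1}(1, F_{n−1}; F_n) = L_{3n}/(1500 F_n³) + (−1)^n n/(50 F_n²) − (−1)^n · 13 L_n/(750 F_n³). -/
open Real

def lucas : ℕ → ℕ
  | 0 => 2
  | 1 => 1
  | (n + 2) => lucas (n + 1) + lucas n

/-- The first Bernoulli polynomial. -/
noncomputable def B1 (t : ℝ) : ℝ := t - 1 / 2

/-- The third Bernoulli polynomial. -/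
noncomputable def B3 (t : ℝ) : ℝ := t ^ 3 - (3 / 2) * t ^ 2 + (1 / 2) * t

/-- Generalized Dedekind sum `s_{g,h}(a,b;c) = Σ_{k=0}^{c−1} g({ak/c}) h({bk/c})`. -/
noncomputable def dedekindSum (g h : ℝ → ℝ) (a b c : ℕ) : ℝ :=
  ∑ k ∈ Finset.range c, g (Int.fract ((a * k : ℝ) / c)) * h (Int.fract ((b * k : ℝ) / c))


lemma pow_sums (c : ℕ) :
    (∑ k ∈ Finset.range c, (k : ℝ)) = c * (c - 1) / 2 ∧
    (∑ k ∈ Finset.range c, (k : ℝ) ^ 2) = c * (c - 1) * (2 * c - 1) / 6 ∧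
    (∑ k ∈ Finset.range c, (k : ℝ) ^ 3) = (c * (c - 1) / 2) ^ 2 ∧
    (∑ k ∈ Finset.range c, (k : ℝ) ^ 4)
      = c * (c - 1) * (2 * c - 1) * (3 * c ^ 2 - 3 * c - 1) / 30 := by
  induction c with
  | zero => simp
  | succ c ih =>
    obtain ⟨h1, h2, h3, h4⟩ := ih
    simp only [Finset.sum_range_succ, h1, h2, h3, h4]
    push_cast
    refine ⟨by ring, by ring, by ring, by ring⟩

lemma sum_poly4 (c : ℕ) (a0 a1 a2 a3 a4 : ℝ) :
    ∑ k ∈ Finset.range c, (a0 + a1 * (k : ℝ) + a2 * (k : ℝ) ^ 2 + a3 * (k : ℝ) ^ 3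
        + a4 * (k : ℝ) ^ 4)
      = a0 * c + a1 * (c * (c - 1) / 2) + a2 * (c * (c - 1) * (2 * c - 1) / 6)
        + a3 * (c * (c - 1) / 2) ^ 2
        + a4 * (c * (c - 1) * (2 * c - 1) * (3 * c ^ 2 - 3 * c - 1) / 30) := by
  obtain ⟨h1, h2, h3, h4⟩ := pow_sums c
  simp only [Finset.sum_add_distrib, ← Finset.mul_sum, h1, h2, h3, h4]
  simp
  ring

noncomputable def B4 (t : ℝ) : ℝ := t ^ 4 - 2 * t ^ 3 + t ^ 2 - 1 / 30

lemma sum_perm (h c : ℕ) (hc : 0 < c) (hco : Nat.Coprime h c) (G : ℕ → ℝ) :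
    ∑ k ∈ Finset.range c, G ((h * k) % c) = ∑ k ∈ Finset.range c, G k := by
  have hmaps : ∀ k ∈ Finset.range c, (h * k) % c ∈ Finset.range c := by
    intro k _
    exact Finset.mem_range.2 (Nat.mod_lt _ hc)
  have hinj : Set.InjOn (fun k => (h * k) % c) (Finset.range c : Set ℕ) := by
    intro a ha b hb hab
    have ha' : a < c := by simpa using ha
    have hb' : b < c := by simpa using hb
    have : h * a ≡ h * b [MOD c] := hab
    have h2 := Nat.ModEq.cancel_left_of_coprime (by rw [Nat.gcd_comm]; exact hco) this
    exact Nat.ModEq.eq_of_lt_of_lt h2 ha' hb'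
  have himg : (Finset.range c).image (fun k => (h * k) % c) = Finset.range c := by
    apply Finset.eq_of_subset_of_card_le
    · intro x hx
      obtain ⟨k, hk, rfl⟩ := Finset.mem_image.1 hx
      exact hmaps k hk
    · rw [Finset.card_image_of_injOn hinj]
  conv_rhs => rw [← himg]
  rw [Finset.sum_image hinj]

lemma fract_nat (m c : ℕ) : Int.fract ((m : ℝ) / c) = ((m % c : ℕ) : ℝ) / c :=
  Int.fract_div_natCast_eq_div_natCast_mod

lemma ded_eq (g f : ℝ → ℝ) (b c : ℕ) :
    dedekindSum g f 1 b c
      = ∑ k ∈ Finset.range c, g ((k : ℝ) / c) * f (((b * k % c : ℕ) : ℝ) / c) := by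
  unfold dedekindSum
  refine Finset.sum_congr rfl fun k hk => ?_
  have hk' := Finset.mem_range.1 hk
  have h1 := fract_nat k c
  have h2 := fract_nat (b * k) c
  rw [Nat.mod_eq_of_lt hk'] at h1
  push_cast at h2
  rw [← h1]
  push_cast
  rw [one_mul, h2]

/-- The sum of `k * B3({hk/c})`. -/
noncomputable def S (h c : ℕ) : ℝ :=
  ∑ k ∈ Finset.range c, (k : ℝ) * B3 (((h * k % c : ℕ) : ℝ) / c)

lemma sumB3 (c : ℕ) (hc : 0 < c) : ∑ k ∈ Finset.range c, B3 ((k : ℝ) / c) = 0 := by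
  have hc' : (c : ℝ) ≠ 0 := by positivity
  have := sum_poly4 c 0 (1 / 2 / c) (-(3 / 2) / c ^ 2) (1 / c ^ 3) 0
  rw [Finset.sum_congr rfl (g := fun k : ℕ => (0 : ℝ) + (1 / 2 / c) * (k : ℝ)
    + (-(3 / 2) / c ^ 2) * (k : ℝ) ^ 2 + (1 / c ^ 3) * (k : ℝ) ^ 3 + 0 * (k : ℝ) ^ 4), this]
  · field_simp
    ring
  · intro k _
    unfold B3
    field_simp
    ring

lemma sumB4 (c : ℕ) (hc : 0 < c) :
    ∑ k ∈ Finset.range c, B4 ((k : ℝ) / c) = -1 / 30 / c ^ 3 := by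
  have hc' : (c : ℝ) ≠ 0 := by positivity
  have := sum_poly4 c (-1 / 30) 0 (1 / c ^ 2) (-2 / c ^ 3) (1 / c ^ 4)
  rw [Finset.sum_congr rfl (g := fun k : ℕ => (-1 / 30 : ℝ) + 0 * (k : ℝ)
    + (1 / c ^ 2) * (k : ℝ) ^ 2 + (-2 / c ^ 3) * (k : ℝ) ^ 3 + (1 / c ^ 4) * (k : ℝ) ^ 4), this]
  · field_simp
    ring
  · intro k _
    unfold B4
    field_simp
    ring

lemma ded_S (h c : ℕ) (hc : 0 < c) (hco : Nat.Coprime h c) :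
    dedekindSum B1 B3 1 h c = S h c / c := by
  have h0 : ∑ k ∈ Finset.range c, B3 (((h * k % c : ℕ) : ℝ) / c) = 0 := by
    rw [sum_perm h c hc hco (fun m => B3 ((m : ℝ) / c)), sumB3 c hc]
  rw [ded_eq, S, Finset.sum_div]
  have : ∀ k ∈ Finset.range c, B1 ((k : ℝ) / c) * B3 (((h * k % c : ℕ) : ℝ) / c)
      = (k : ℝ) * B3 (((h * k % c : ℕ) : ℝ) / c) / c
        - 1 / 2 * B3 (((h * k % c : ℕ) : ℝ) / c) := by
    intro k _
    unfold B1
    ring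
  rw [Finset.sum_congr rfl this, Finset.sum_sub_distrib, ← Finset.mul_sum, h0]
  ring

/-- The polynomial summed over lattice points. -/
noncomputable def ff (h c k j : ℝ) : ℝ := (h * k + c * j) * (h * k - c * j) ^ 2

noncomputable def Psi (h c k q : ℝ) : ℝ :=
  -(2 / 3) * h * c ^ 2 * k * B3 ((h * k - c * q) / c) + c ^ 3 / 4 * B4 ((h * k - c * q) / c)

lemma inner_ff_sum (h c k : ℝ) (hc : c ≠ 0) (q : ℕ) :
    ∑ j ∈ Finset.range q, ff h c k j = Psi h c k ((q : ℝ) - 1) - Psi h c k (-1) := by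
  induction q with
  | zero => simp
  | succ q ih =>
    rw [Finset.sum_range_succ, ih]
    unfold ff Psi B3 B4
    push_cast
    field_simp
    ring

lemma Psi_side (h c : ℕ) (hc : 0 < c) (hco : Nat.Coprime h c) :
    ∑ k ∈ Finset.range c, ∑ j ∈ Finset.range (h * k / c + 1), ff h c k j
      = -(2 / 3) * h * c ^ 2 * S h c - 1 / 120
        - ∑ k ∈ Finset.range c, Psi h c k (-1) := by
  have hc' : (c : ℝ) ≠ 0 := by positivity
  have key : ∀ k ∈ Finset.range c, ∑ j ∈ Finset.range (h * k / c + 1), ff h c k j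
      = -(2 / 3) * h * c ^ 2 * ((k : ℝ) * B3 (((h * k % c : ℕ) : ℝ) / c))
        + c ^ 3 / 4 * B4 (((h * k % c : ℕ) : ℝ) / c) - Psi h c k (-1) := by
    intro k _
    rw [inner_ff_sum _ _ _ hc']
    have hdm : (h : ℝ) * k - c * ((h * k / c : ℕ) : ℝ) = ((h * k % c : ℕ) : ℝ) := by
      have := Nat.div_add_mod (h * k) c
      have h2 : ((c * (h * k / c) + h * k % c : ℕ) : ℝ) = ((h * k : ℕ) : ℝ) := by rw [this]
      push_cast at h2 ⊢
      linarith
    have e : (((h * k / c + 1 : ℕ) : ℝ) - 1) = ((h * k / c : ℕ) : ℝ) := by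
      push_cast
      ring
    rw [e]
    congr 1
    unfold Psi
    rw [hdm]
    ring
  rw [Finset.sum_congr rfl key, Finset.sum_sub_distrib, Finset.sum_add_distrib,
    ← Finset.mul_sum, ← Finset.mul_sum, sum_perm h c hc hco (fun m => B4 ((m : ℝ) / c)),
    sumB4 c hc, S]
  field_simp
  ring

lemma Psi_const (h : ℝ) (c : ℕ) (hc : 0 < c) :
    ∑ k ∈ Finset.range c, Psi h c k (-1)
      = (c ^ 3 / 4 * (-1 / 30)) * c
        + (-(2/3) * h * c ^ 2 * 0 + c ^ 3 / 4 * (0 * (h / c))) * (c * (c - 1) / 2)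
        + (-(2 / 3) * h * c ^ 2 * (h / c * (1 / 2)) + c ^ 3 / 4 * (h / c) ^ 2)
            * (c * (c - 1) * (2 * c - 1) / 6)
        + (-(2 / 3) * h * c ^ 2 * ((h / c) ^ 2 * (3 / 2)) + c ^ 3 / 4 * (2 * (h / c) ^ 3))
            * (c * (c - 1) / 2) ^ 2
        + (-(2 / 3) * h * c ^ 2 * ((h / c) ^ 3) + c ^ 3 / 4 * (h / c) ^ 4)
            * (c * (c - 1) * (2 * c - 1) * (3 * c ^ 2 - 3 * c - 1) / 30) := by
  have hc' : (c : ℝ) ≠ 0 := by positivity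
  rw [← sum_poly4]
  refine Finset.sum_congr rfl fun k _ => ?_
  unfold Psi B3 B4
  field_simp
  ring

lemma full_sum (h c : ℕ) :
    ∑ k ∈ Finset.range c, ∑ j ∈ Finset.range h, ff h c k j
      = (h:ℝ) ^ 3 * (c * (c - 1) / 2 : ℝ) ^ 2 * h + c ^ 3 * (h * (h - 1) / 2 : ℝ) ^ 2 * c
        - h ^ 2 * c * (c * (c - 1) * (2 * c - 1) / 6) * (h * (h - 1) / 2)
        - h * c ^ 2 * (h * (h - 1) * (2 * h - 1) / 6) * (c * (c - 1) / 2) := by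
  have h1 : ∀ k ∈ Finset.range c, ∑ j ∈ Finset.range h, ff h c k j
      = c ^ 3 * (h * (h - 1) / 2 : ℝ) ^ 2
        + (-(h * c ^ 2 * (h * (h - 1) * (2 * h - 1) / 6 : ℝ))) * (k : ℝ)
        + (-(h ^ 2 * c * (h * (h - 1) / 2 : ℝ))) * (k : ℝ) ^ 2
        + (h ^ 3 * h : ℝ) * (k : ℝ) ^ 3 + 0 * (k : ℝ) ^ 4 := by
    intro k _
    have := sum_poly4 h ((h : ℝ) ^ 3 * k ^ 3) (-(h ^ 2 * c * k ^ 2)) (-(h * c ^ 2 * k)) (c ^ 3) 0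
    rw [Finset.sum_congr rfl (fun j _ => ?_), this]
    · ring
    · unfold ff
      ring
  rw [Finset.sum_congr rfl h1, sum_poly4]
  ring

lemma filter_eq (h c k : ℕ) (hc : 0 < c) (hh : 0 < h) (hk : k < c) :
    (Finset.range h).filter (fun j => c * j ≤ h * k) = Finset.range (h * k / c + 1) := by
  ext j
  simp only [Finset.mem_filter, Finset.mem_range, Nat.lt_succ_iff]
  rw [Nat.le_div_iff_mul_le hc, mul_comm j c]
  constructor
  · exact fun h => h.2
  · intro hj
    refine ⟨?_, hj⟩
    have : c * j < c * h := by
      calc c * j ≤ h * k := hj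
        _ < h * c := Nat.mul_lt_mul_of_pos_left hk hh
        _ = c * h := mul_comm _ _
    exact Nat.lt_of_mul_lt_mul_left this

lemma lattice (h c : ℕ) (hc : 0 < c) (hh : 0 < h) :
    ∑ k ∈ Finset.range c, ∑ j ∈ Finset.range h, ff h c k j
      = ∑ k ∈ Finset.range c, ∑ j ∈ Finset.range (h * k / c + 1), ff h c k j
        + ∑ j ∈ Finset.range h, ∑ k ∈ Finset.range (c * j / h + 1), ff c h j k := by
  have h1 : ∑ k ∈ Finset.range c, ∑ j ∈ Finset.range (h * k / c + 1), ff h c k j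
      = ∑ k ∈ Finset.range c, ∑ j ∈ Finset.range h, if c * j ≤ h * k then ff h c k j else 0 := by
    refine Finset.sum_congr rfl fun k hk => ?_
    rw [← filter_eq h c k hc hh (Finset.mem_range.1 hk), Finset.sum_filter]
  have h2 : ∑ j ∈ Finset.range h, ∑ k ∈ Finset.range (c * j / h + 1), ff c h j k
      = ∑ k ∈ Finset.range c, ∑ j ∈ Finset.range h, if h * k ≤ c * j then ff c h j k else 0 := by
    rw [Finset.sum_comm]
    refine Finset.sum_congr rfl fun j hj => ?_
    rw [← filter_eq c h j hh hc (Finset.mem_range.1 hj), Finset.sum_filter]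
  rw [h1, h2, ← Finset.sum_add_distrib]
  refine Finset.sum_congr rfl fun k _ => ?_
  rw [← Finset.sum_add_distrib]
  refine Finset.sum_congr rfl fun j _ => ?_
  have hsym : ff c h j k = ff h c k j := by
    unfold ff
    ring
  rw [hsym]
  rcases lt_trichotomy (c * j) (h * k) with hlt | heq | hgt
  · rw [if_pos hlt.le, if_neg (by omega)]
    ring
  · have h0 : ff h c k j = 0 := by
      have : (c : ℝ) * j = h * k := by exact_mod_cast heq
      unfold ff
      rw [this]
      ring
    simp [h0]
  · rw [if_neg (by omega), if_pos hgt.le]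
    ring

lemma reciprocity (h c : ℕ) (hc : 0 < c) (hh : 0 < h) (hco : Nat.Coprime h c) :
    4 * ((h : ℝ) * c ^ 2 * S h c + c * h ^ 2 * S c h)
      = -(h ^ 4 + c ^ 4) / 30 + h ^ 2 * c ^ 2 / 6 - 1 / 10 := by
  have hc' : (c : ℝ) ≠ 0 := by positivity
  have hh' : (h : ℝ) ≠ 0 := by positivity
  have e := lattice h c hc hh
  rw [full_sum, Psi_side h c hc hco, Psi_side c h hh hco.symm, Psi_const _ c hc,
    Psi_const _ h hh] at e
  field_simp at e ⊢
  linarith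

lemma S_mod (a b c : ℕ) (hab : a ≡ b [MOD c]) : S a c = S b c := by
  unfold S
  refine Finset.sum_congr rfl fun k _ => ?_
  have : a * k % c = b * k % c := Nat.ModEq.mul_right k hab
  rw [this]

lemma cassini (n : ℕ) : ((Nat.fib (n + 1) : ℝ)) ^ 2 - Nat.fib n * Nat.fib (n + 1)
    - (Nat.fib n : ℝ) ^ 2 = (-1) ^ n := by
  induction n with
  | zero => simp
  | succ n ih =>
    rw [pow_succ (-1 : ℝ) n, ← ih, Nat.fib_add_two]
    push_cast
    ring

lemma lucas_fib (n : ℕ) : (lucas n : ℝ) = 2 * Nat.fib (n + 1) - Nat.fib n ∧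
    (lucas (n + 1) : ℝ) = 2 * Nat.fib (n + 2) - Nat.fib (n + 1) := by
  induction n with
  | zero => norm_num [lucas]
  | succ n ih =>
    refine ⟨ih.2, ?_⟩
    rw [lucas, Nat.fib_add_two (n := n + 1)]
    push_cast
    rw [ih.1, ih.2, Nat.fib_add_two (n := n)]
    push_cast
    ring

lemma lucas_three (n : ℕ) :
    (lucas (3 * n) : ℝ) = 2 * (Nat.fib (n + 1) : ℝ) ^ 3 - 3 * Nat.fib n * (Nat.fib (n + 1)) ^ 2
      + 9 * (Nat.fib n) ^ 2 * Nat.fib (n + 1) - 4 * (Nat.fib n) ^ 3 ∧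
    (lucas (3 * n + 1) : ℝ) = (Nat.fib (n + 1) : ℝ) ^ 3 + 6 * Nat.fib n * (Nat.fib (n + 1)) ^ 2
      - 3 * (Nat.fib n) ^ 2 * Nat.fib (n + 1) + 3 * (Nat.fib n) ^ 3 := by
  induction n with
  | zero => norm_num [lucas]
  | succ n ih =>
    have e1 : lucas (3 * (n + 1)) = 2 * lucas (3 * n + 1) + lucas (3 * n) := by
      rw [show 3 * (n + 1) = (3 * n + 1) + 2 by ring, lucas, lucas]
      ring
    have e2 : lucas (3 * (n + 1) + 1) = 3 * lucas (3 * n + 1) + 2 * lucas (3 * n) := by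
      rw [show 3 * (n + 1) + 1 = (3 * n + 2) + 2 by ring, lucas, lucas, lucas]
      ring
    rw [e1, e2, Nat.fib_add_two (n := n)]
    push_cast
    rw [ih.1, ih.2]
    constructor <;> ring

lemma S_formula (n : ℕ) :
    1500 * (Nat.fib (n + 2) : ℝ) ^ 2 * S (Nat.fib (n + 1)) (Nat.fib (n + 2))
      = lucas (3 * (n + 2)) + 30 * (-1) ^ (n + 2) * ((n + 2 : ℕ) : ℝ) * Nat.fib (n + 2)
        - 26 * (-1) ^ (n + 2) * lucas (n + 2) := by
  induction n with
  | zero => norm_num [lucas, S]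
  | succ n ih =>
    have hx : 0 < Nat.fib (n + 2) := Nat.fib_pos.2 (by omega)
    have hy : 0 < Nat.fib (n + 3) := Nat.fib_pos.2 (by omega)
    have hr := reciprocity (Nat.fib (n + 2)) (Nat.fib (n + 3)) hy hx
      (Nat.fib_coprime_fib_succ (n + 2))
    have hm : S (Nat.fib (n + 3)) (Nat.fib (n + 2)) = S (Nat.fib (n + 1)) (Nat.fib (n + 2)) := by
      apply S_mod
      rw [Nat.fib_add_two (n := n + 1)]
      simp [Nat.ModEq]
    rw [hm] at hr
    have hc := cassini (n + 2)
    have hsq : ((-1 : ℝ) ^ (n + 2)) ^ 2 = 1 := by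
      rw [← pow_mul, mul_comm, pow_mul]
      simp
    have l1 := (lucas_fib (n + 2)).1
    have l2 := (lucas_fib (n + 2)).2
    have t1 := (lucas_three (n + 2)).1
    have t2 := (lucas_three (n + 3)).1
    have hz : (Nat.fib (n + 4) : ℝ) = Nat.fib (n + 2) + Nat.fib (n + 3) := by
      rw [Nat.fib_add_two (n := n + 2)]
      push_cast
      rfl
    have hx' : (Nat.fib (n + 2) : ℝ) ≠ 0 := by positivity
    simp only [show n + 1 + 2 = n + 3 by ring, show n + 1 + 1 = n + 2 by ring,
      show n + 2 + 1 = n + 3 by ring, show n + 2 + 2 = n + 4 by ring,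
      show n + 3 + 1 = n + 4 by ring] at *
    rw [l1, t1] at ih
    rw [l2, t2, pow_succ _ (n + 2)]
    rw [hz]
    push_cast at ih ⊢
    generalize S (Nat.fib (n + 2)) (Nat.fib (n + 3)) = s' at *
    generalize S (Nat.fib (n + 1)) (Nat.fib (n + 2)) = s at *
    generalize (-1 : ℝ) ^ (n + 2) = ε at *
    generalize (Nat.fib (n + 2) : ℝ) = x at *
    generalize (Nat.fib (n + 3) : ℝ) = y at *
    apply mul_left_cancel₀ hx'
    have hr2 : 4 * (x * y ^ 2 * s' + y * x ^ 2 * s)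
      = -(x ^ 4 + y ^ 4) / 30 + x ^ 2 * y ^ 2 / 6 - ε ^ 2 / 10 := by rw [hr, hsq]
    subst hc
    linear_combination 375 * hr2 - y * ih

lemma neg_B3 (c m m' : ℕ) (hc : 0 < c) (hm : m < c) (hm' : m' < c) (h : (m + m') % c = 0) :
    B3 ((m' : ℝ) / c) = -B3 ((m : ℝ) / c) := by
  have hc' : (c : ℝ) ≠ 0 := by positivity
  obtain ⟨d, hd⟩ := Nat.dvd_of_mod_eq_zero h
  have hd2 : d < 2 := by
    by_contra hcon
    have : c * 2 ≤ c * d := Nat.mul_le_mul_left c (by omega)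
    omega
  interval_cases d
  · have h1 : m = 0 := by omega
    have h2 : m' = 0 := by omega
    subst h1 h2
    simp [B3]
  · have : (m' : ℝ) = c - m := by
      have : ((m + m' : ℕ) : ℝ) = ((c * 1 : ℕ) : ℝ) := by rw [hd]
      push_cast at this
      linarith
    rw [this]
    unfold B3
    field_simp
    ring

lemma ded_symm (n : ℕ) (hn : 2 ≤ n) :
    dedekindSum B1 B3 1 (Nat.fib (n - 1)) (Nat.fib n)
        = (-1 : ℝ) ^ n * dedekindSum B3 B1 1 (Nat.fib (n - 1)) (Nat.fib n) := by
  obtain ⟨m, rfl⟩ : ∃ m, n = m + 2 := ⟨n - 2, by omega⟩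
  rw [show m + 2 - 1 = m + 1 by omega]
  have hc : 0 < Nat.fib (m + 2) := Nat.fib_pos.2 (by omega)
  have hco : Nat.Coprime (Nat.fib (m + 1)) (Nat.fib (m + 2)) := Nat.fib_coprime_fib_succ (m + 1)
  have hcas := cassini m
  have hrec : Nat.fib (m + 2) = Nat.fib m + Nat.fib (m + 1) := Nat.fib_add_two
  have hcas2 : (Nat.fib (m + 1) : ℝ) ^ 2 = Nat.fib m * Nat.fib (m + 2) + (-1) ^ m := by
    rw [hrec]
    push_cast
    linarith
  generalize Nat.fib (m + 1) = b at *
  generalize Nat.fib (m + 2) = c at *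
  generalize Nat.fib m = a at *
  rw [ded_eq, ded_eq]
  rw [← sum_perm b c hc hco (fun k => B1 ((k : ℝ) / c) * B3 (((b * k % c : ℕ) : ℝ) / c)),
    Finset.mul_sum]
  refine Finset.sum_congr rfl fun k hk => ?_
  have hk' := Finset.mem_range.1 hk
  have hmm : b * (b * k % c) % c = b * b * k % c := by
    rw [Nat.mul_mod_mod, mul_assoc]
  rw [hmm, pow_add]
  rcases Nat.even_or_odd m with he | ho
  · rw [he.neg_one_pow] at hcas2 ⊢
    have hb : b * b = a * c + 1 := by
      have : (b : ℝ) * b = a * c + 1 := by linarith [hcas2, sq (b : ℝ)]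
      exact_mod_cast this
    have : b * b * k % c = k := by
      rw [hb, show (a * c + 1) * k = k + c * (a * k) by ring, Nat.add_mul_mod_self_left,
        Nat.mod_eq_of_lt hk']
    rw [this]
    ring
  · rw [ho.neg_one_pow] at hcas2 ⊢
    have hb : b * b + 1 = a * c := by
      have : (b : ℝ) * b + 1 = a * c := by linarith [hcas2, sq (b : ℝ)]
      exact_mod_cast this
    have h0 : (k + b * b * k % c) % c = 0 := by
      rw [Nat.add_mod_mod, show k + b * b * k = (b * b + 1) * k by ring, hb,
        show a * c * k = c * (a * k) by ring, Nat.mul_mod_right]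
    rw [neg_B3 c k _ hc hk' (Nat.mod_lt _ hc) h0]
    ring

/-- Closed-form expression for the generalized Dedekind sums `s_{1,3}` and `s_{3,1}`
at consecutive Fibonacci numbers. -/
theorem dedekind_sum_13_closed_form (n : ℕ) (hn : 2 ≤ n) :
    dedekindSum B1 B3 1 (Nat.fib (n - 1)) (Nat.fib n)
        = (-1 : ℝ) ^ n * dedekindSum B3 B1 1 (Nat.fib (n - 1)) (Nat.fib n) ∧
      dedekindSum B1 B3 1 (Nat.fib (n - 1)) (Nat.fib n)
        = (lucas (3 * n) : ℝ) / (1500 * (Nat.fib n : ℝ) ^ 3)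
          + (-1 : ℝ) ^ n * n / (50 * (Nat.fib n : ℝ) ^ 2)
          - (-1 : ℝ) ^ n * 13 * (lucas n : ℝ) / (750 * (Nat.fib n : ℝ) ^ 3) := by
  refine ⟨ded_symm n hn, ?_⟩
  obtain ⟨m, rfl⟩ : ∃ m, n = m + 2 := ⟨n - 2, by omega⟩
  rw [show m + 2 - 1 = m + 1 by omega]
  have hc : 0 < Nat.fib (m + 2) := Nat.fib_pos.2 (by omega)
  have hc' : (Nat.fib (m + 2) : ℝ) ≠ 0 := by positivity
  rw [ded_S _ _ hc (Nat.fib_coprime_fib_succ (m + 1))]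
  have hs := S_formula m
  generalize S (Nat.fib (m + 1)) (Nat.fib (m + 2)) = s at *
  generalize (Nat.fib (m + 2) : ℝ) = c at *
  have : s = (lucas (3 * (m + 2)) + 30 * (-1) ^ (m + 2) * ((m + 2 : ℕ) : ℝ) * c
        - 26 * (-1) ^ (m + 2) * lucas (m + 2)) / (1500 * c ^ 2) := by
    rw [← hs]
    field_simp
  rw [this]
  field_simp
  ring
end

section
/- For every positive integer N the following hold: (i) φ⌊φN⌋ < ⌊φ²N⌋; (ii) ⌊φ²N⌋ = ⌊φ⌊φN⌋ + φ^{−1}⌋; (iii) N + ⌊φN + φ^{−1}⌋ = ⌊φ⌊φN + φ^{−1}⌋ + φ^{−1}⌋; (iv) (1/2)⌊φ(2N−1) + φ^{−1}⌋ < ⌊φN + φ^{−1}⌋ < (1/2)⌊φ(2N+1) + φ^{−1}⌋. -/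
open Real

noncomputable def phi : ℝ := (1 + Real.sqrt 5) / 2

theorem phi_sq_aux : phi ^ 2 = phi + 1 := Real.goldenRatio_sq

theorem phi_ne_aux (n : ℕ) (hn : 0 < n) (m : ℤ) : phi * (n : ℝ) ≠ (m : ℝ) := by
  have h : Irrational (phi * (n : ℝ)) := Real.goldenRatio_irrational.mul_natCast hn.ne'
  exact h.ne_int m

/-- Floor function identities and inequalities for the golden ratio. -/
theorem golden_floor_identities (N : ℕ) (hN : 0 < N) :
    phi * (⌊phi * (N : ℝ)⌋ : ℝ) < (⌊phi ^ 2 * (N : ℝ)⌋ : ℝ) ∧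
      ⌊phi ^ 2 * (N : ℝ)⌋ = ⌊phi * (⌊phi * (N : ℝ)⌋ : ℝ) + phi⁻¹⌋ ∧
      (N : ℤ) + ⌊phi * (N : ℝ) + phi⁻¹⌋
        = ⌊phi * (⌊phi * (N : ℝ) + phi⁻¹⌋ : ℝ) + phi⁻¹⌋ ∧
      (1 / 2 : ℝ) * (⌊phi * (2 * (N : ℝ) - 1) + phi⁻¹⌋ : ℝ)
        < (⌊phi * (N : ℝ) + phi⁻¹⌋ : ℝ) ∧
      (⌊phi * (N : ℝ) + phi⁻¹⌋ : ℝ)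
        < (1 / 2 : ℝ) * (⌊phi * (2 * (N : ℝ) + 1) + phi⁻¹⌋ : ℝ) := by
  have hsq := phi_sq_aux
  have h2 : (2.2 : ℝ) < Real.sqrt 5 := by
    apply Real.lt_sqrt_of_sq_lt; norm_num
  have h3 : Real.sqrt 5 < 2.4 := by
    rw [Real.sqrt_lt' (by norm_num)]; norm_num
  have hl : 1.6 < phi := by unfold phi; linarith
  have hu : phi < 1.7 := by unfold phi; linarith
  have hinv : phi⁻¹ = phi - 1 := by
    apply inv_eq_of_mul_eq_one_right; nlinarith
  have hne1 := phi_ne_aux N hN ⌊phi * (N : ℝ)⌋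
  have hne2 := phi_ne_aux (N + 1) (by omega) (⌊phi * (N : ℝ) + (phi - 1)⌋ + 1)
  have hfl : ⌊phi ^ 2 * (N : ℝ)⌋ = N + ⌊phi * (N : ℝ)⌋ := by
    rw [hsq, add_mul, one_mul, Int.floor_add_natCast, add_comm]
  rw [hfl, hinv]
  have a1 := Int.floor_le (phi * (N : ℝ))
  have a2 := Int.lt_floor_add_one (phi * (N : ℝ))
  have b1 := Int.floor_le (phi * (N : ℝ) + (phi - 1))
  have b2 := Int.lt_floor_add_one (phi * (N : ℝ) + (phi - 1))
  generalize ⌊phi * (N : ℝ)⌋ = a at *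
  generalize ⌊phi * (N : ℝ) + (phi - 1)⌋ = b at *
  push_cast at hne2
  have a1' : (a : ℝ) < phi * N := lt_of_le_of_ne a1 (Ne.symm hne1)
  have b1' : (b : ℝ) < phi * N + (phi - 1) := by
    refine lt_of_le_of_ne b1 (fun h => hne2 ?_)
    linarith
  have hp : 0 < phi - 1 := by linarith
  have hN2 : phi ^ 2 * (N : ℝ) = phi * N + N := by rw [hsq]; ring
  have c1 := mul_pos hp (sub_pos.2 a1')
  have c2 := mul_pos hp (sub_pos.2 a2)
  have d1 := mul_pos hp (sub_pos.2 b1')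
  have d2 := mul_pos hp (sub_pos.2 b2)
  refine ⟨?_, ?_, ?_, ?_, ?_⟩
  · push_cast
    nlinarith
  · symm
    rw [Int.floor_eq_iff]
    push_cast
    constructor <;> nlinarith
  · symm
    rw [Int.floor_eq_iff]
    push_cast
    constructor <;> nlinarith
  · have : ⌊phi * (2 * (N : ℝ) - 1) + (phi - 1)⌋ < 2 * b := by
      rw [Int.floor_lt]
      push_cast
      linarith
    have : (⌊phi * (2 * (N : ℝ) - 1) + (phi - 1)⌋ : ℝ) < 2 * b := by exact_mod_cast this
    linarith
  · have : 2 * b + 1 ≤ ⌊phi * (2 * (N : ℝ) + 1) + (phi - 1)⌋ := by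
      rw [Int.le_floor]
      push_cast
      linarith
    have : (2 * b + 1 : ℝ) ≤ (⌊phi * (2 * (N : ℝ) + 1) + (phi - 1)⌋ : ℝ) := by
      exact_mod_cast this
    linarith
end
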